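/- If n is a positive integer all of whose nontrivial decompositions are even, then n has at most one nontrivial decomposition. -/

import Mathlib

/-- `IsDecomp n a m` means the `m` consecutive positive integers
`a+1, a+2, …, a+m` form a decomposition of `n`. -/
def IsDecomp (n a m : ℕ) : Prop :=
  1 ≤ m ∧ (Finset.range m).sum (fun i => a + i + 1) = n

/-!
A decomposition of `n` of length `m` starting at `a + 1` is a factorization
`m * (2 * a + m + 1) = 2 * n`, whose two factors have opposite parity. An odd divisor `e` of `m`
divides `n` and is small enough, `e * (e + 1) ≤ 2 * n`, to be itself the length of a decomposition
of `n`. If no odd `e > 1` is such a length, then `m` is a power of two. When moreover `m` is even,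
its cofactor is odd, so `m` is the largest power of two dividing `2 * n`; this determines `m`, and
`m` determines `a`.
-/

theorem two_mul_sum_range_add_add_one (a m : ℕ) :
    2 * ∑ i ∈ Finset.range m, (a + i + 1) = m * (2 * a + m + 1) := by
  induction m with
  | zero => simp
  | succ k ih => rw [Finset.sum_range_succ, mul_add, ih]; ring

theorem isDecomp_iff {n a m : ℕ} :
    IsDecomp n a m ↔ 1 ≤ m ∧ m * (2 * a + m + 1) = 2 * n := by
  rw [IsDecomp, ← two_mul_sum_range_add_add_one, Nat.mul_right_inj two_ne_zero]

theorem exists_isDecomp_of_odd_of_dvd {n e : ℕ} (he : Odd e) (hdvd : e ∣ n)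
    (hle : e * (e + 1) ≤ 2 * n) : ∃ a, IsDecomp n a e := by
  obtain ⟨c, rfl⟩ := hdvd
  have hcofactor : e + 1 ≤ 2 * c :=
    Nat.le_of_mul_le_mul_left (by linarith) he.pos
  obtain ⟨i, rfl⟩ := he
  obtain ⟨a, rfl⟩ : ∃ a, c = i + 1 + a := Nat.exists_eq_add_of_le (by omega)
  exact ⟨a, isDecomp_iff.2 ⟨by omega, by ring⟩⟩

namespace IsDecomp

variable {n a b m l : ℕ}

theorem length_mul_eq (hm : IsDecomp n a m) : m * (2 * a + m + 1) = 2 * n :=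
  (isDecomp_iff.1 hm).2

theorem start_unique (ha : IsDecomp n a m) (hb : IsDecomp n b m) : a = b := by
  have hcofactor : 2 * a + m + 1 = 2 * b + m + 1 :=
    Nat.eq_of_mul_eq_mul_left ha.1 (ha.length_mul_eq.trans hb.length_mul_eq.symm)
  omega

theorem exists_of_odd_of_dvd_length {e : ℕ} (hm : IsDecomp n a m) (he : Odd e) (hem : e ∣ m) :
    ∃ b, IsDecomp n b e := by
  have hdvd : e ∣ n :=
    (Nat.coprime_two_right.2 he).dvd_of_dvd_mul_left
      (hm.length_mul_eq ▸ hem.mul_right (2 * a + m + 1))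
  have hle : e ≤ m := Nat.le_of_dvd hm.1 hem
  refine exists_isDecomp_of_odd_of_dvd he hdvd ?_
  calc e * (e + 1) ≤ m * (2 * a + m + 1) := Nat.mul_le_mul hle (by omega)
    _ = 2 * n := hm.length_mul_eq

theorem exists_length_eq_two_pow (h : ∀ a m : ℕ, IsDecomp n a m → m ≠ 1 → Even m)
    (hm : IsDecomp n a m) : ∃ k, m = 2 ^ k := by
  refine (Nat.eq_two_pow_or_exists_odd_prime_and_dvd m).resolve_right ?_
  rintro ⟨p, hp, hpm, hodd⟩
  obtain ⟨b, hb⟩ := hm.exists_of_odd_of_dvd_length hodd hpm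
  exact Nat.not_even_iff_odd.2 hodd (h b p hb hp.ne_one)

theorem two_pow_dvd_length {k : ℕ} (hk : IsDecomp n a (2 ^ k)) (hl : IsDecomp n b l)
    (heven : Even l) : 2 ^ k ∣ l := by
  have hodd : Odd (2 * b + l + 1) := ((even_two_mul b).add heven).add_one
  refine ((Nat.coprime_two_left.2 hodd).pow_left k).dvd_of_dvd_mul_right ?_
  rw [hl.length_mul_eq, ← hk.length_mul_eq]
  exact dvd_mul_right _ _

end IsDecomp

/-- If `n` is a positive integer all of whose nontrivial decompositions are
even, then `n` has at most one nontrivial decomposition. -/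
theorem at_most_one_nontrivial_decomposition (n : ℕ) (hn : 0 < n)
    (h : ∀ a m : ℕ, IsDecomp n a m → m ≠ 1 → Even m) :
    {p : ℕ × ℕ | IsDecomp n p.1 p.2 ∧ p.2 ≠ 1}.Subsingleton := by
  rintro ⟨a, m⟩ ⟨hm : IsDecomp n a m, hm_ne : m ≠ 1⟩
    ⟨b, l⟩ ⟨hl : IsDecomp n b l, hl_ne : l ≠ 1⟩
  have hm_even : Even m := h a m hm hm_ne
  have hl_even : Even l := h b l hl hl_ne
  obtain ⟨j, rfl⟩ := hm.exists_length_eq_two_pow h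
  obtain ⟨k, rfl⟩ := hl.exists_length_eq_two_pow h
  have hlength : 2 ^ j = 2 ^ k :=
    Nat.dvd_antisymm (hm.two_pow_dvd_length hl hl_even) (hl.two_pow_dvd_length hm hm_even)
  rw [← hlength] at hl ⊢
  rw [hm.start_unique hl]
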